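/- Let R be a Noetherian local domain, v a divisorial valuation of the quotient field K of R dominating R (so trdeg of the residue field of v over R/m_R equals dim R − 1), and w the Gauss valuation on K(z) extending v by w(Σ a_i z^i) = min(v(a_i) + i). Then w is a divisorial valuation of the polynomial ring A = R[z] with center at the maximal ideal m = m_R A + zA; that is, trdeg_{A/m}(K(z)w) = ht(m) − 1 = dim A − 1. -/

import Mathlib

open IsLocalRing Polynomial

lemma aux_gen {K : Type*} [Field K] (v : Valuation K (WithZero (Multiplicative ℤ)))
    (u : WithZero (Multiplicative ℤ))
    (hu : u = ((Multiplicative.ofAdd (-1 : ℤ) : Multiplicative ℤ) : WithZero (Multiplicative ℤ)))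
    (r : K) (hr0 : r ≠ 0) (hr : v r < 1) :
    ∃ (e : ℕ) (a : K), 1 ≤ e ∧ v a = u ^ e ∧ ∀ (c : K) (n : ℤ), v c = u ^ n → (e : ℤ) ∣ n := by
  have hu0 : u ≠ 0 := by rw [hu]; exact WithZero.coe_ne_zero
  have key : ∃ n : ℕ, 1 ≤ n ∧ ∃ a, v a = u ^ n := by
    have h0 : v r ≠ 0 := (Valuation.ne_zero_iff v).2 hr0
    obtain ⟨x, hx⟩ := WithZero.ne_zero_iff_exists.1 h0
    have hx1 : x < 1 := by rw [← hx] at hr; exact_mod_cast hr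
    have hx2 : x.toAdd < 0 := hx1
    refine ⟨x.toAdd.natAbs, by omega, r, ?_⟩
    rw [← hx, hu, ← WithZero.coe_pow, ← ofAdd_nsmul]
    congr 1
    apply Multiplicative.toAdd.injective
    simp only [nsmul_eq_mul, toAdd_ofAdd]
    omega
  classical
  obtain ⟨he1, a, ha⟩ := Nat.find_spec key
  refine ⟨Nat.find key, a, he1, ha, ?_⟩
  intro c n hc
  set e := Nat.find key with hedef
  have hpos : (0 : ℤ) < e := by exact_mod_cast he1
  by_contra hnd
  have h1 : n % e ≠ 0 := fun h => hnd (Int.dvd_of_emod_eq_zero h)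
  have h2 := Int.emod_nonneg n hpos.ne'
  have h3 := Int.emod_lt_of_pos n hpos
  have h4 := Int.emod_add_mul_ediv n e
  refine Nat.find_min key (m := (n % e).toNat) (by omega) ⟨by omega, c * (a ^ (n / e))⁻¹, ?_⟩
  rw [map_mul, map_inv₀, map_zpow₀, hc, ha, ← zpow_natCast, ← zpow_natCast, ← zpow_mul,
    ← zpow_neg, ← zpow_add₀ hu0, Int.toNat_of_nonneg h2]
  congr 1
  linarith

lemma aux_field {k F L : Type*} [Field k] [Field F] [Field L] (φ : k →+* F) (ι : F →+* L)
    (χ : k →+* L) (h : ∀ x, χ x = ι (φ x)) (t : L)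
    (htr : ∀ P : F[X], P.eval₂ ι t = 0 → P = 0)
    (hgen : ∀ (x : L) (S : Subfield L), (∀ y, ι y ∈ S) → t ∈ S → x ∈ S)
    (n : ℕ) (hs : ∃ s : Set F, @IsTranscendenceBasis s k F _ _ φ.toAlgebra Subtype.val ∧
      s.Finite ∧ s.ncard = n) :
    ∃ s : Set L, @IsTranscendenceBasis s k L _ _ χ.toAlgebra Subtype.val ∧
      s.Finite ∧ s.ncard = n + 1 := by
  let _ := φ.toAlgebra
  let _ := ι.toAlgebra
  let _ := χ.toAlgebra
  have : IsScalarTower k F L := IsScalarTower.of_algebraMap_eq h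
  obtain ⟨s, hs, hfin, hcard⟩ := hs
  have hy : IsTranscendenceBasis F (fun _ : Unit => t) := by
    rw [isTranscendenceBasis_iff_algebraicIndependent_isAlgebraic]
    constructor
    · rw [algebraicIndependent_unique_type_iff]
      rw [transcendental_iff]
      exact htr
    · constructor
      intro x
      have := hgen x (IntermediateField.adjoin F {t}).toSubfield
        (fun y => (IntermediateField.adjoin F {t}).algebraMap_mem y)
        (IntermediateField.mem_adjoin_simple_self F t)
      have hx : x ∈ IntermediateField.adjoin F {t} := this
      rw [IntermediateField.mem_adjoin_iff_div] at hx
      obtain ⟨p, hp, q, hq, rfl⟩ := hx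
      have hr : Set.range (fun _ : Unit => t) = {t} := by simp
      rw [hr]
      have h1 : IsAlgebraic (Algebra.adjoin F {t}) p :=
        isAlgebraic_algebraMap (⟨p, hp⟩ : Algebra.adjoin F {t})
      have h2 : IsAlgebraic (Algebra.adjoin F {t}) q :=
        isAlgebraic_algebraMap (⟨q, hq⟩ : Algebra.adjoin F {t})
      rw [div_eq_mul_inv]
      exact h1.mul h2.inv
  have hb := hs.sumElim_comp hy
  have := hfin.to_subtype
  have hinj := hb.1.injective
  refine ⟨Set.range _, hb.to_subtype_range, Set.finite_range _, ?_⟩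
  rw [← Set.image_univ, Set.ncard_image_of_injective _ hinj, Set.ncard_univ, Nat.card_sum]
  simp [hcard, Nat.card_coe_set_eq]
  omega

lemma aux_res {L : Type*} [Field L] (w : Valuation L (WithZero (Multiplicative ℤ)))
    (a : w.valuationSubring) : residue _ a = 0 ↔ w (a : L) < 1 := by
  have hI : w.Integers w.valuationSubring :=
    ⟨Subtype.val_injective, fun x => x.2, fun x h => ⟨⟨x, h⟩, rfl⟩⟩
  rw [residue_eq_zero_iff, mem_maximalIdeal, mem_nonunits_iff,
    hI.isUnit_iff_valuation_eq_one]
  exact ⟨fun h => lt_of_le_of_ne a.2 h, fun h => ne_of_lt h⟩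

lemma aux_iota {K L : Type*} [Field K] [Field L] (v : Valuation K (WithZero (Multiplicative ℤ)))
    (w : Valuation L (WithZero (Multiplicative ℤ))) (j : K →+* L) (hj : ∀ c, w (j c) = v c) :
    ∃ ι : ResidueField v.valuationSubring →+* ResidueField w.valuationSubring,
      ∀ (a : v.valuationSubring) (b : w.valuationSubring), (b : L) = j a →
        ι (residue _ a) = residue _ b := by
  let f : v.valuationSubring →+* w.valuationSubring :=
    (j.comp v.valuationSubring.subtype).codRestrict w.valuationSubring.toSubring
      (fun a => by
        change w (j a) ≤ 1
        rw [hj]; exact a.2)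
  have hf : ∀ a, ((f a : w.valuationSubring) : L) = j a := fun a => rfl
  have key : ∀ a ∈ maximalIdeal v.valuationSubring, ((residue _).comp f) a = 0 := by
    intro a ha
    rw [RingHom.comp_apply, aux_res, hf, hj, ← aux_res, residue_eq_zero_iff]
    exact ha
  refine ⟨Ideal.Quotient.lift _ ((residue _).comp f) key, ?_⟩
  intro a b hb
  have : b = f a := Subtype.ext (by rw [hb, hf])
  rw [this]
  exact Ideal.Quotient.lift_mk _ _ _

section gauss

variable {K : Type*} [Field K] (v : Valuation K (WithZero (Multiplicative ℤ)))
    (w : Valuation (RatFunc K) (WithZero (Multiplicative ℤ)))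
    (u : WithZero (Multiplicative ℤ))

lemma gauss_le (hgauss : ∀ p : Polynomial K,
      w (algebraMap (Polynomial K) (RatFunc K) p) = p.support.sup fun i => v (p.coeff i) * u ^ i)
    (p : K[X]) (i : ℕ) :
    v (p.coeff i) * u ^ i ≤ w (algebraMap (Polynomial K) (RatFunc K) p) := by
  rw [hgauss]
  by_cases h : i ∈ p.support
  · exact Finset.le_sup (f := fun i => v (p.coeff i) * u ^ i) h
  · rw [notMem_support_iff.1 h]; simp

lemma gauss_C (hgauss : ∀ p : Polynomial K,
      w (algebraMap (Polynomial K) (RatFunc K) p) = p.support.sup fun i => v (p.coeff i) * u ^ i)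
    (c : K) : w (algebraMap K (RatFunc K) c) = v c := by
  rw [IsScalarTower.algebraMap_apply K K[X] (RatFunc K), hgauss]
  by_cases h : c = 0
  · subst h; simp
  · simp only [algebraMap_eq]
    rw [support_C h]; simp

lemma gauss_X (hgauss : ∀ p : Polynomial K,
      w (algebraMap (Polynomial K) (RatFunc K) p) = p.support.sup fun i => v (p.coeff i) * u ^ i) :
    w RatFunc.X = u := by
  rw [← RatFunc.algebraMap_X, hgauss, support_X]; simp

lemma gauss_mono (hgauss : ∀ p : Polynomial K,
      w (algebraMap (Polynomial K) (RatFunc K) p) = p.support.sup fun i => v (p.coeff i) * u ^ i)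
    (c : K) (n : ℤ) : w (algebraMap K (RatFunc K) c * RatFunc.X ^ n) = v c * u ^ n := by
  rw [map_mul, map_zpow₀, gauss_C v w u hgauss, gauss_X v w u hgauss]

/-- residues of monomials lie in the subfield generated by the residue field of `v` and `t` -/
lemma res_mono (hu0 : u ≠ 0) (hgauss : ∀ p : Polynomial K,
      w (algebraMap (Polynomial K) (RatFunc K) p) = p.support.sup fun i => v (p.coeff i) * u ^ i)
    (ι : ResidueField v.valuationSubring →+* ResidueField w.valuationSubring)
    (hι : ∀ (a : v.valuationSubring) (b : w.valuationSubring),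
      (b : RatFunc K) = algebraMap K (RatFunc K) a → ι (residue _ a) = residue _ b)
    (e : ℕ) (a : K) (ha : v a = u ^ e)
    (hdvd : ∀ (c : K) (n : ℤ), v c = u ^ n → (e : ℤ) ∣ n)
    (T : w.valuationSubring) (hT : (T : RatFunc K) = algebraMap K (RatFunc K) a⁻¹ * RatFunc.X ^ e)
    (S : Subfield (ResidueField w.valuationSubring)) (hS : ∀ y, ι y ∈ S) (hTS : residue _ T ∈ S)
    (c : K) (n : ℤ) (b : w.valuationSubring)
    (hb : (b : RatFunc K) = algebraMap K (RatFunc K) c * RatFunc.X ^ n) :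
    residue _ b ∈ S := by
  by_cases h : w (b : RatFunc K) < 1
  · rw [(aux_res w b).2 h]; exact S.zero_mem
  have h1 : v c * u ^ n = 1 := by
    rw [← gauss_mono v w u hgauss, ← hb]
    exact le_antisymm b.2 (not_lt.1 h)
  have hc : v c = u ^ (-n) := by
    rw [zpow_neg]; exact eq_inv_of_mul_eq_one_left h1
  obtain ⟨m, hm⟩ := hdvd c _ hc
  obtain ⟨m, rfl⟩ : ∃ k, m = -k := ⟨-m, by ring⟩
  have hn : n = e * m := by linarith
  have ha0 : a ≠ 0 := by
    rw [← Valuation.ne_zero_iff v, ha]; exact pow_ne_zero _ hu0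
  have hX : (RatFunc.X : RatFunc K) ≠ 0 := RatFunc.X_ne_zero
  have haL : algebraMap K (RatFunc K) a ≠ 0 := by simpa using ha0
  have hv1 : v (c * a ^ m) = 1 := by
    rw [map_mul, map_zpow₀, ha, ← zpow_natCast, ← zpow_mul, ← hn, h1]
  let cv : v.valuationSubring := ⟨c * a ^ m, hv1.le⟩
  let cw : w.valuationSubring := ⟨algebraMap K (RatFunc K) (c * a ^ m), by
    change w _ ≤ 1
    rw [gauss_C v w u hgauss]; exact hv1.le⟩
  have hcc : residue _ cw ∈ S := by
    rw [← hι cv cw rfl]; exact hS _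
  obtain ⟨q, hq⟩ := Int.eq_nat_or_neg m
  have hbT : (b : RatFunc K) = (cw : RatFunc K) * (T : RatFunc K) ^ m := by
    rw [hb, hT, hn]
    simp only [cw, map_mul, map_zpow₀, map_inv₀, mul_zpow, inv_zpow, zpow_mul, zpow_natCast]
    field_simp
  rcases hq with rfl | rfl
  · have : b = cw * T ^ q := Subtype.ext (by rw [hbT]; simp)
    rw [this, map_mul, map_pow]
    exact S.mul_mem hcc (S.pow_mem hTS _)
  · have hT1 : w (T : RatFunc K) = 1 := by
      rw [hT, ← zpow_natCast, gauss_mono v w u hgauss, map_inv₀, ha, zpow_natCast]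
      exact inv_mul_cancel₀ (pow_ne_zero _ hu0)
    have hT0 : (T : RatFunc K) ≠ 0 := by
      rw [← Valuation.ne_zero_iff w, hT1]; exact one_ne_zero
    have : b * T ^ q = cw := Subtype.ext (by
      push_cast
      rw [hbT, zpow_neg, zpow_natCast, mul_assoc, inv_mul_cancel₀ (pow_ne_zero _ hT0), mul_one])
    have h2 := congrArg (residue _) this
    rw [map_mul, map_pow] at h2
    have hr0 : residue _ T ≠ 0 := fun h0 => by
      rw [aux_res, hT1] at h0; exact lt_irrefl _ h0
    rw [eq_div_of_mul_eq (pow_ne_zero _ hr0) h2]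
    exact S.div_mem hcc (S.pow_mem hTS _)

/-- residues of polynomials over a monomial -/
lemma res_poly (hu0 : u ≠ 0) (hgauss : ∀ p : Polynomial K,
      w (algebraMap (Polynomial K) (RatFunc K) p) = p.support.sup fun i => v (p.coeff i) * u ^ i)
    (S : Subfield (ResidueField w.valuationSubring))
    (hmono : ∀ (c : K) (n : ℤ) (b : w.valuationSubring),
      (b : RatFunc K) = algebraMap K (RatFunc K) c * RatFunc.X ^ n → residue _ b ∈ S)
    (p : K[X]) (c : K) (n : ℕ) (hc : c ≠ 0)
    (hp : w (algebraMap _ (RatFunc K) p) ≤ v c * u ^ n)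
    (b : w.valuationSubring) (hb : (b : RatFunc K) =
      algebraMap _ (RatFunc K) p * (algebraMap K (RatFunc K) c * RatFunc.X ^ n)⁻¹) :
    residue _ b ∈ S := by
  have hX : (RatFunc.X : RatFunc K) ≠ 0 := RatFunc.X_ne_zero
  have hc0 : v c ≠ 0 := (Valuation.ne_zero_iff v).2 hc
  have hterm : ∀ i : ℕ, w (algebraMap K (RatFunc K) (p.coeff i * c⁻¹) *
      RatFunc.X ^ ((i : ℤ) - n)) ≤ 1 := by
    intro i
    rw [gauss_mono v w u hgauss, zpow_sub₀ hu0, map_mul, map_inv₀, zpow_natCast, zpow_natCast]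
    have h1 := (gauss_le v w u hgauss p i).trans hp
    have h2 : v c * u ^ n ≠ 0 := mul_ne_zero hc0 (pow_ne_zero _ hu0)
    have h3 : v (p.coeff i) * (v c)⁻¹ * (u ^ i / u ^ n) = (v (p.coeff i) * u ^ i) / (v c * u ^ n) := by
      field_simp
    rw [h3]
    exact div_le_one_of_le₀ h1 (zero_le)
  let B : ℕ → w.valuationSubring := fun i => ⟨_, hterm i⟩
  have hsum : b = ∑ i ∈ p.support, B i := by
    apply Subtype.ext
    have h4 : ((∑ i ∈ p.support, B i : w.valuationSubring) : RatFunc K)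
        = ∑ i ∈ p.support, (B i : RatFunc K) :=
      map_sum w.valuationSubring.subtype B p.support
    rw [h4, hb]
    conv_lhs => rw [p.as_sum_support_C_mul_X_pow]
    rw [map_sum, Finset.sum_mul]
    refine Finset.sum_congr rfl fun i _ => ?_
    have hcL : algebraMap K (RatFunc K) c ≠ 0 := by simpa using hc
    simp only [B, map_mul, map_pow, RatFunc.algebraMap_X, map_inv₀, zpow_sub₀ hX, zpow_natCast,
      RatFunc.algebraMap_C, RatFunc.algebraMap_eq_C]
    rw [mul_inv, div_eq_mul_inv]; ring
  rw [hsum, map_sum]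
  exact S.sum_mem fun i _ => hmono _ _ (B i) rfl

lemma res_all (hu0 : u ≠ 0) (hgauss : ∀ p : Polynomial K,
      w (algebraMap (Polynomial K) (RatFunc K) p) = p.support.sup fun i => v (p.coeff i) * u ^ i)
    (S : Subfield (ResidueField w.valuationSubring))
    (hmono : ∀ (c : K) (n : ℤ) (b : w.valuationSubring),
      (b : RatFunc K) = algebraMap K (RatFunc K) c * RatFunc.X ^ n → residue _ b ∈ S)
    (x : ResidueField w.valuationSubring) : x ∈ S := by
  obtain ⟨f, rfl⟩ := residue_surjective x
  obtain ⟨p, q, hq0, hpq⟩ := IsFractionRing.div_surjective (A := K[X]) (f : RatFunc K)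
  have hq0 : q ≠ 0 := nonZeroDivisors.ne_zero hq0
  have hqL : algebraMap _ (RatFunc K) q ≠ 0 := by simpa using hq0
  have hwq : w (algebraMap _ (RatFunc K) q) ≠ 0 := (Valuation.ne_zero_iff w).2 hqL
  obtain ⟨i, hi, hmax⟩ := Finset.exists_mem_eq_sup q.support (support_nonempty.2 hq0)
    (fun i => v (q.coeff i) * u ^ i)
  rw [← hgauss] at hmax
  have hci : q.coeff i ≠ 0 := mem_support_iff.1 hi
  have hf1 : w (f : RatFunc K) ≤ 1 := f.2
  have hpq1 : w (algebraMap _ (RatFunc K) p) ≤ w (algebraMap _ (RatFunc K) q) := by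
    rw [← hpq, map_div₀] at hf1
    exact (div_le_one₀ (zero_lt_iff.2 hwq)).1 hf1
  set μ := algebraMap K (RatFunc K) (q.coeff i) * RatFunc.X ^ i with hμ
  have hwμ : w μ = w (algebraMap _ (RatFunc K) q) := by
    rw [hmax, hμ, ← zpow_natCast, gauss_mono v w u hgauss, zpow_natCast]
  have hμ0 : μ ≠ 0 := by rw [← Valuation.ne_zero_iff w, hwμ]; exact hwq
  let bp : w.valuationSubring := ⟨algebraMap _ (RatFunc K) p * μ⁻¹, by
    change w _ ≤ 1
    rw [map_mul, map_inv₀, hwμ, ← div_eq_mul_inv]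
    exact div_le_one_of_le₀ hpq1 zero_le⟩
  have hbq1 : w (algebraMap _ (RatFunc K) q * μ⁻¹) = 1 := by
    rw [map_mul, map_inv₀, hwμ, mul_inv_cancel₀ hwq]
  let bq : w.valuationSubring := ⟨algebraMap _ (RatFunc K) q * μ⁻¹, hbq1.le⟩
  have h1 : residue _ bp ∈ S := res_poly v w u hu0 hgauss S hmono p _ i hci
    (hpq1.trans hmax.le) bp rfl
  have h2 : residue _ bq ∈ S := res_poly v w u hu0 hgauss S hmono q _ i hci
    hmax.le bq rfl
  have h3 : f * bq = bp := Subtype.ext (by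
    change (f : RatFunc K) * (_ * _) = _ * _
    rw [← hpq]; field_simp)
  have h4 := congrArg (residue _) h3
  rw [map_mul] at h4
  have hr0 : residue _ bq ≠ 0 := fun h0 => by
    rw [aux_res] at h0; exact h0.ne hbq1
  rw [eq_div_of_mul_eq hr0 h4]
  exact S.div_mem h1 h2

lemma res_transc (hu0 : u ≠ 0) (hgauss : ∀ p : Polynomial K,
      w (algebraMap (Polynomial K) (RatFunc K) p) = p.support.sup fun i => v (p.coeff i) * u ^ i)
    (ι : ResidueField v.valuationSubring →+* ResidueField w.valuationSubring)
    (hι : ∀ (a : v.valuationSubring) (b : w.valuationSubring),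
      (b : RatFunc K) = algebraMap K (RatFunc K) a → ι (residue _ a) = residue _ b)
    (e : ℕ) (he : 1 ≤ e) (a : K) (ha : v a = u ^ e)
    (T : w.valuationSubring) (hT : (T : RatFunc K) = algebraMap K (RatFunc K) a⁻¹ * RatFunc.X ^ e)
    (P : (ResidueField v.valuationSubring)[X]) (hP : P.eval₂ ι (residue _ T) = 0) : P = 0 := by
  choose g hg using (residue_surjective (R := v.valuationSubring))
  have hgm : ∀ y, w (algebraMap K (RatFunc K) (g y : K)) ≤ 1 := fun y => by
    rw [gauss_C v w u hgauss]; exact (g y).2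
  let G : ResidueField v.valuationSubring → w.valuationSubring := fun y => ⟨_, hgm y⟩
  have hG : ∀ y, residue _ (G y) = ι y := fun y => by
    rw [← hι (g y) (G y) rfl, hg]
  let B : w.valuationSubring := ∑ i ∈ P.support, G (P.coeff i) * T ^ i
  have hB : residue _ B = 0 := by
    rw [← hP, eval₂_eq_sum, Polynomial.sum, map_sum]
    simp only [map_mul, map_pow, hG]
  rw [aux_res] at hB
  let Q : K[X] := ∑ i ∈ P.support, C ((g (P.coeff i) : K) * (a⁻¹) ^ i) * X ^ (e * i)
  have hBQ : (B : RatFunc K) = algebraMap _ (RatFunc K) Q := by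
    have h4 : (B : RatFunc K) = ∑ i ∈ P.support, (G (P.coeff i) : RatFunc K) * (T : RatFunc K) ^ i :=
      map_sum w.valuationSubring.subtype (fun i => G (P.coeff i) * T ^ i) P.support
    rw [h4, map_sum]
    refine Finset.sum_congr rfl fun i _ => ?_
    rw [hT]
    simp only [G, map_mul, map_pow, RatFunc.algebraMap_X, mul_pow, pow_mul,
      RatFunc.algebraMap_C, RatFunc.algebraMap_eq_C]
    ring
  rw [hBQ] at hB
  by_contra hP0
  obtain ⟨i, hi⟩ := support_nonempty.2 hP0
  have hcoeff : Q.coeff (e * i) = (g (P.coeff i) : K) * (a⁻¹) ^ i := by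
    simp only [Q, finsetSum_coeff, coeff_C_mul, coeff_X_pow]
    rw [Finset.sum_eq_single i]
    · simp
    · intro j _ hj
      rw [if_neg, mul_zero]
      intro h
      exact hj (Nat.eq_of_mul_eq_mul_left he h).symm
    · intro h; exact absurd hi h
  have hle := gauss_le v w u hgauss Q (e * i)
  rw [hcoeff, map_mul, map_pow, map_inv₀, ha, mul_assoc, pow_mul, ← mul_pow,
    inv_mul_cancel₀ (pow_ne_zero _ hu0), one_pow, mul_one] at hle
  have h5 : residue _ (g (P.coeff i)) = 0 := (aux_res v _).2 (hle.trans_lt hB)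
  rw [hg] at h5
  exact mem_support_iff.1 hi h5

end gauss

lemma aux_center {R : Type*} [CommRing R] (I : Ideal R) (p : R[X]) :
    p ∈ Ideal.map (C : R →+* Polynomial R) I + Ideal.span {(X : Polynomial R)} ↔
      p.coeff 0 ∈ I := by
  constructor
  · intro h
    have : Ideal.map (C : R →+* Polynomial R) I + Ideal.span {(X : Polynomial R)} ≤
        I.comap (constantCoeff (R := R)) := by
      refine sup_le (Ideal.map_le_iff_le_comap.2 ?_) ?_
      · intro x hx; simpa [Ideal.mem_comap] using hx
      · rw [Ideal.span_singleton_le_iff_mem]; simp [Ideal.mem_comap]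
    exact this h
  · intro h
    rw [← divX_mul_X_add p, add_comm]
    have h1 : C (p.coeff 0) ∈ Ideal.map (C : R →+* Polynomial R) I := Ideal.mem_map_of_mem _ h
    have h2 : p.divX * X ∈ Ideal.span {(X : Polynomial R)} :=
      Ideal.mul_mem_left _ _ (Ideal.mem_span_singleton_self _)
    rw [Submodule.add_eq_sup]
    exact Submodule.add_mem_sup h2 h1

/-- Let `R` be a Noetherian local domain of Krull dimension `d` with quotient
field `K`, `v` a divisorial valuation of `K` dominating `R` (so the residue field of `v` has
transcendence degree `d − 1 = dim R − 1` over `R/m_R`), and `w` the Gauss valuation on `K(z)`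
extending `v` by `w(Σ aᵢ zⁱ) = min (v(aᵢ) + i)`.  Then `w` is a divisorial valuation of the
polynomial ring `A = R[z]` with center the maximal ideal `m = m_R A + z A`: the center of `w`
on `A` is `m`, and `trdeg_{A/m}(K(z)w) = ht(m) − 1 = dim A − 1 = d`
(note `A/m = R/m_R`). -/
theorem stmt_3 (R : Type*) [CommRing R] [IsDomain R] [IsNoetherianRing R] [IsLocalRing R]
    (K : Type*) [Field K] [Algebra R K] [IsFractionRing R K]
    (d : ℕ) (hd : ringKrullDim R = d) (hd1 : 1 ≤ d)
    (v : Valuation K (WithZero (Multiplicative ℤ)))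
    -- `v` dominates `R`:
    (hvR : ∀ r : R, v (algebraMap R K r) ≤ 1)
    (hvdom : ∀ r : R, v (algebraMap R K r) < 1 ↔ r ∈ maximalIdeal R)
    -- the inclusion of residue fields `R/m_R → Kv`:
    (φ : ResidueField R →+* ResidueField v.valuationSubring)
    (hφ : ∀ (r : R) (a : v.valuationSubring),
      (a : K) = algebraMap R K r → φ (residue R r) = residue _ a)
    -- `v` is divisorial: `trdeg_{R/m_R}(Kv) = ht(m_R) − 1 = d − 1`:
    (hdivisorial : ∃ s : Set (ResidueField v.valuationSubring),
      @IsTranscendenceBasis s (ResidueField R) (ResidueField v.valuationSubring)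
        _ _ φ.toAlgebra Subtype.val ∧ s.Finite ∧ s.ncard = d - 1)
    -- `w` is the Gauss valuation on `K(z)` extending `v`:
    (w : Valuation (RatFunc K) (WithZero (Multiplicative ℤ)))
    (hgauss : ∀ p : Polynomial K,
      w (algebraMap (Polynomial K) (RatFunc K) p) =
        p.support.sup fun i =>
          v (p.coeff i) * (Multiplicative.ofAdd (-1 : ℤ) : Multiplicative ℤ) ^ i)
    -- the inclusion of residue fields `A/m = R/m_R → K(z)w`:
    (χ : ResidueField R →+* ResidueField w.valuationSubring)
    (hχ : ∀ (r : R) (a : w.valuationSubring),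
      (a : RatFunc K) = algebraMap K (RatFunc K) (algebraMap R K r) →
        χ (residue R r) = residue _ a) :
    -- the center of `w` on `A = R[z]` is the maximal ideal `m = m_R A + z A`:
    (∀ p : Polynomial R,
      w (algebraMap (Polynomial K) (RatFunc K) (p.map (algebraMap R K))) ≤ 1 ∧
      (w (algebraMap (Polynomial K) (RatFunc K) (p.map (algebraMap R K))) < 1 ↔
        p ∈ Ideal.map (C : R →+* Polynomial R) (maximalIdeal R) +
              Ideal.span {(X : Polynomial R)})) ∧
    -- `ht(m) − 1 = dim A − 1 = d`:
    ringKrullDim (Polynomial R) = ((d + 1 : ℕ) : WithBot ℕ∞) ∧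
    -- `trdeg_{A/m}(K(z)w) = d`, i.e. `w` is divisorial for `A`:
    (∃ s : Set (ResidueField w.valuationSubring),
      @IsTranscendenceBasis s (ResidueField R) (ResidueField w.valuationSubring)
        _ _ χ.toAlgebra Subtype.val ∧ s.Finite ∧ s.ncard = d) := by
  classical
  set u : WithZero (Multiplicative ℤ) :=
    ((Multiplicative.ofAdd (-1 : ℤ) : Multiplicative ℤ) : WithZero (Multiplicative ℤ)) with hu
  have hu0 : u ≠ 0 := WithZero.coe_ne_zero
  have hu1 : u < 1 := by
    rw [hu, ← WithZero.coe_one, WithZero.coe_lt_coe]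
    change (-1 : ℤ) < 0
    norm_num
  have hinj : Function.Injective (algebraMap R K) := IsFractionRing.injective R K
  have hle : ∀ p : Polynomial R, ∀ i,
      v ((p.map (algebraMap R K)).coeff i) * u ^ i ≤ u ^ i := by
    intro p i
    rw [coeff_map]
    exact mul_le_of_le_one_left' (hvR _)
  refine ⟨?_, ?_, ?_⟩
  · intro p
    constructor
    · rw [hgauss]
      exact Finset.sup_le fun i _ => (hle p i).trans (pow_le_one' hu1.le i)
    · rw [aux_center, ← hvdom]
      constructor
      · intro h
        have := (gauss_le v w u hgauss (p.map (algebraMap R K)) 0).trans_lt h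
        simpa using this
      · intro h
        rw [hgauss, Finset.sup_lt_iff (by simp)]
        intro i _
        rcases Nat.eq_zero_or_pos i with rfl | hi
        · simpa using h
        · exact (hle p i).trans_lt (pow_lt_one₀ zero_le hu1 hi.ne')
  · rw [Polynomial.ringKrullDim_of_isNoetherianRing, hd]
    norm_cast
  · obtain ⟨r, hr, hr0⟩ : ∃ r ∈ maximalIdeal R, r ≠ 0 := by
      by_contra hcon
      push Not at hcon
      have hbot : maximalIdeal R = ⊥ := (Submodule.eq_bot_iff _).2 hcon
      have hf : IsField R := IsLocalRing.isField_iff_maximalIdeal_eq.2 hbot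
      rw [ringKrullDim_eq_zero_of_isField hf] at hd
      have : (0 : ℕ) = d := by exact_mod_cast hd
      omega
    obtain ⟨e, a, he, ha, hdvd⟩ := aux_gen v u hu (algebraMap R K r)
      (by simpa using hr0) ((hvdom r).2 hr)
    obtain ⟨ι, hι⟩ := aux_iota v w (algebraMap K (RatFunc K)) (gauss_C v w u hgauss)
    let T : w.valuationSubring := ⟨algebraMap K (RatFunc K) a⁻¹ * RatFunc.X ^ e, by
      change w _ ≤ 1
      rw [← zpow_natCast, gauss_mono v w u hgauss, map_inv₀, ha, zpow_natCast]
      exact (inv_mul_cancel₀ (pow_ne_zero _ hu0)).le⟩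
    have hfin := aux_field φ ι χ ?_ (residue _ T)
      (res_transc v w u hu0 hgauss ι hι e he a ha T rfl)
      (fun x S hS hTS => res_all v w u hu0 hgauss S
        (fun c n b hb => res_mono v w u hu0 hgauss ι hι e a ha hdvd T rfl S hS hTS c n b hb) x)
      (d - 1) hdivisorial
    · rwa [Nat.sub_add_cancel hd1] at hfin
    · intro x
      obtain ⟨r, rfl⟩ := residue_surjective x
      let a1 : v.valuationSubring := ⟨algebraMap R K r, hvR r⟩
      let b1 : w.valuationSubring := ⟨algebraMap K (RatFunc K) (algebraMap R K r), by
        change w _ ≤ 1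
        rw [gauss_C v w u hgauss]; exact hvR r⟩
      rw [hχ r b1 rfl, hφ r a1 rfl, hι a1 b1 rfl]
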